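/- Let α and β be real numbers with 0 < α < 1 and 0 < β < 1. For real y > 2, define F(y) as the value of the continued fraction (y²−1)/2 + K_{m=1}^∞(a_m/b_m(y)), where for m ≥ 1: a_{2m} = (2m−2+α+β)(2m−1−α)(2m−1−β)/4, a_{2m−1} = (2m−α−β)(2m−1+α)(2m−1+β)/4, b_{2m}(y) = y²−1, b_{2m−1}(y) = 2m−1. Then for every real x > 2, the continued fractions defining F(x) and F(x+2) converge to positive real values, and F(x)/F(x+2) = (x+α)(x+1−α−β)(x+β) / [(x+2−α)(x+1+α+β)(x+2−β)]. -/

import Mathlib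

open Filter

noncomputable def cfA (a b : ℕ → ℝ) : ℕ → ℝ
  | 0 => 1
  | 1 => b 0
  | n + 2 => b (n + 1) * cfA a b (n + 1) + a (n + 1) * cfA a b n

noncomputable def cfB (a b : ℕ → ℝ) : ℕ → ℝ
  | 0 => 0
  | 1 => 1
  | n + 2 => b (n + 1) * cfB a b (n + 1) + a (n + 1) * cfB a b n

/-- The continued fraction `b 0 + K_{n=1}^∞ (a n / b n)` converges to `v`. -/
def CFConvergesTo (a b : ℕ → ℝ) (v : ℝ) : Prop :=
  (∀ᶠ n in atTop, cfB a b n ≠ 0) ∧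
    Tendsto (fun n => cfA a b n / cfB a b n) atTop (nhds v)
/-- `a_{2m} = (2m−2+α+β)(2m−1−α)(2m−1−β)/4`, `a_{2m−1} = (2m−α−β)(2m−1+α)(2m−1+β)/4`. -/
noncomputable def aSeq (α β : ℝ) : ℕ → ℝ := fun n =>
  if n % 2 = 0 then
    ((n : ℝ) - 2 + α + β) * ((n : ℝ) - 1 - α) * ((n : ℝ) - 1 - β) / 4
  else
    ((n : ℝ) + 1 - α - β) * ((n : ℝ) + α) * ((n : ℝ) + β) / 4

/-- `b_0 = (y²−1)/2`, `b_{2m}(y) = y²−1`, `b_{2m−1}(y) = 2m−1`. -/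
noncomputable def bSeq (y : ℝ) : ℕ → ℝ := fun n =>
  if n = 0 then (y ^ 2 - 1) / 2 else if n % 2 = 0 then y ^ 2 - 1 else (n : ℝ)

/-!
Two successive convergents of a continued fraction with nonnegative `a` and positive `b` differ by
`(-1)^i` times a decreasing quantity, its gap. When `w² aₙ₊₁ ≤ 4 bₙ bₙ₊₁`, the AM-GM inequality
makes two steps of the recurrence shrink the gap by a factor `1 + w`, so the gaps tend to `0` as
soon as `∑ w` diverges.

The canonical numerators and denominators at `x` and at `x + 2` are related by a Bauer–Muir
transformation: up to the factors `(x + α)(x + 1 - α - β)(x + β)` for numerators and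
`(x + 2 - α)(x + 1 + α + β)(x + 2 - β)` for denominators, the even convergents at `x + 2` are
weighted mediants of two successive convergents at `x`, with weights that are eventually positive.
Passing to the limit gives the functional equation.
-/

section Sequences

theorem tendsto_zero_of_one_add_mul_le {Q w : ℕ → ℝ} (hQ : Antitone Q) (hQ0 : ∀ n, 0 ≤ Q n)
    (hw0 : ∀ n, 0 ≤ w n) (hw : ¬ Summable w) (h : ∀ n, (1 + w n) * Q (n + 2) ≤ Q n) :
    Tendsto Q atTop (nhds 0) := by
  have hbdd : BddBelow (Set.range Q) := ⟨0, Set.forall_mem_range.2 hQ0⟩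
  have hlim := tendsto_atTop_ciInf hQ hbdd
  have hLQ : ∀ n, (⨅ n, Q n) ≤ Q n := ciInf_le hbdd
  have hL0 : 0 ≤ ⨅ n, Q n := le_ciInf hQ0
  generalize ⨅ n, Q n = L at hlim hLQ hL0
  obtain rfl | hL := hL0.eq_or_lt
  · exact hlim
  refine absurd (summable_of_sum_range_le (c := (Q 0 + Q 1) / L) hw0 fun N => ?_) hw
  have telescoped : (∑ n ∈ Finset.range N, w n) * L ≤ Q 0 + Q 1 - (Q N + Q (N + 1)) := by
    induction N with
    | zero => simp
    | succ N ih =>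
      have hstep := mul_le_mul_of_nonneg_left (hLQ (N + 2)) (hw0 N)
      rw [Finset.sum_range_succ, add_mul]
      linarith [h N]
  rw [le_div_iff₀ hL]
  linarith [hQ0 N, hQ0 (N + 1)]

theorem tendsto_weighted_mediant {ι : Type*} {l : Filter ι} {s t a b c d : ι → ℝ} {L : ℝ}
    (hab : Tendsto (fun i => a i / b i) l (nhds L)) (hcd : Tendsto (fun i => c i / d i) l (nhds L))
    (hb : ∀ᶠ i in l, 0 < b i) (hd : ∀ᶠ i in l, 0 < d i)
    (hs : ∀ᶠ i in l, 0 ≤ s i) (ht : ∀ᶠ i in l, 0 < t i) :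
    Tendsto (fun i => (s i * a i + t i * c i) / (s i * b i + t i * d i)) l (nhds L) := by
  have hmin := hab.min hcd
  have hmax := hab.max hcd
  rw [min_self] at hmin
  rw [max_self] at hmax
  refine tendsto_of_tendsto_of_tendsto_of_le_of_le' hmin hmax ?_ ?_
  · filter_upwards [hb, hd, hs, ht] with i hb hd hs ht
    have hab_ge := (le_div_iff₀ hb).1 (min_le_left (a i / b i) (c i / d i))
    have hcd_ge := (le_div_iff₀ hd).1 (min_le_right (a i / b i) (c i / d i))
    rw [le_div_iff₀ (by positivity)]
    linarith [mul_le_mul_of_nonneg_left hab_ge hs, mul_le_mul_of_nonneg_left hcd_ge ht.le]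
  · filter_upwards [hb, hd, hs, ht] with i hb hd hs ht
    have hab_le := (div_le_iff₀ hb).1 (le_max_left (a i / b i) (c i / d i))
    have hcd_le := (div_le_iff₀ hd).1 (le_max_right (a i / b i) (c i / d i))
    rw [div_le_iff₀ (by positivity)]
    linarith [mul_le_mul_of_nonneg_left hab_le hs, mul_le_mul_of_nonneg_left hcd_le ht.le]

theorem mul_mul_le_of_sq_le_four_mul {p r s : ℝ} (hp : 0 < p) (h : s ^ 2 ≤ 4 * p * r) (u t : ℝ) :
    s * (u * t) ≤ p * u ^ 2 + r * t ^ 2 := by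
  have hsquare : 4 * p * (p * u ^ 2 + r * t ^ 2 - s * (u * t)) =
      (2 * p * u - s * t) ^ 2 + (4 * p * r - s ^ 2) * t ^ 2 := by ring
  have hnonneg : 0 ≤ 4 * p * (p * u ^ 2 + r * t ^ 2 - s * (u * t)) := by
    rw [hsquare]
    exact add_nonneg (sq_nonneg _) (mul_nonneg (sub_nonneg.2 h) (sq_nonneg t))
  exact sub_nonneg.1 (nonneg_of_mul_nonneg_right hnonneg (by positivity))

end Sequences

section Convergence

/-- The three-term Wallis recurrence of the continued fraction with coefficients `a` and `b`,
indexed as in `cfA` and `cfB`: the term of index `n + 1` stands for the paper's term of index `n`.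
It lets numerators and denominators be treated alike. -/
def IsWallisSolution (a b U : ℕ → ℝ) : Prop :=
  ∀ n, U (n + 2) = b (n + 1) * U (n + 1) + a (n + 1) * U n

/-- The distance between the convergents of index `i` and `i + 1`, for nonnegative `a` and
positive `b`; the product is the absolute value of their determinant. -/
noncomputable def cfGap (a b : ℕ → ℝ) (i : ℕ) : ℝ :=
  (∏ j ∈ Finset.range (i + 1), a (j + 1)) / (cfB a b (i + 1) * cfB a b (i + 2))

variable {a b : ℕ → ℝ}

theorem isWallisSolution_cfA (a b : ℕ → ℝ) : IsWallisSolution a b (cfA a b) := fun n => by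
  rw [cfA]

theorem isWallisSolution_cfB (a b : ℕ → ℝ) : IsWallisSolution a b (cfB a b) := fun n => by
  rw [cfB]

theorem cfA_mul_cfB_sub_cfA_mul_cfB (a b : ℕ → ℝ) (n : ℕ) :
    cfA a b (n + 2) * cfB a b (n + 1) - cfA a b (n + 1) * cfB a b (n + 2) =
      (-1) ^ n * ∏ j ∈ Finset.range (n + 1), a (j + 1) := by
  induction n with
  | zero =>
    simp only [cfA, cfB, zero_add, pow_zero, Finset.prod_range_one]
    ring
  | succ n ih =>
    rw [Finset.prod_range_succ, pow_succ, isWallisSolution_cfA a b (n + 1),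
      isWallisSolution_cfB a b (n + 1)]
    linear_combination -a (n + 2) * ih

theorem cfB_succ_pos (ha : ∀ n, 0 ≤ a (n + 1)) (hb : ∀ n, 0 < b (n + 1)) :
    ∀ n, 0 < cfB a b (n + 1)
  | 0 => by simp [cfB]
  | 1 => by simpa [cfB] using hb 0
  | n + 2 => by
    rw [isWallisSolution_cfB a b (n + 1)]
    exact add_pos_of_pos_of_nonneg (mul_pos (hb _) (cfB_succ_pos ha hb (n + 1)))
      (mul_nonneg (ha _) (cfB_succ_pos ha hb n).le)

theorem eventually_cfB_pos (ha : ∀ n, 0 ≤ a (n + 1)) (hb : ∀ n, 0 < b (n + 1)) :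
    ∀ᶠ n in atTop, 0 < cfB a b n := by
  filter_upwards [eventually_ge_atTop 1] with n hn
  obtain ⟨k, rfl⟩ := Nat.exists_eq_add_of_le' hn
  exact cfB_succ_pos ha hb k

theorem cfA_div_cfB_succ (ha : ∀ n, 0 ≤ a (n + 1)) (hb : ∀ n, 0 < b (n + 1)) (n : ℕ) :
    cfA a b (n + 1) / cfB a b (n + 1) =
      b 0 + ∑ i ∈ Finset.range n, (-1) ^ i * cfGap a b i := by
  induction n with
  | zero => simp [cfA, cfB]
  | succ n ih =>
    have hB₁ := (cfB_succ_pos ha hb n).ne'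
    have hB₂ : cfB a b (n + 2) ≠ 0 := (cfB_succ_pos ha hb (n + 1)).ne'
    rw [Finset.sum_range_succ, ← add_assoc, ← ih, cfGap, ← mul_div_assoc,
      ← cfA_mul_cfB_sub_cfA_mul_cfB]
    field_simp
    ring

theorem cfGap_nonneg (ha : ∀ n, 0 ≤ a (n + 1)) (hb : ∀ n, 0 < b (n + 1)) (i : ℕ) :
    0 ≤ cfGap a b i :=
  div_nonneg (Finset.prod_nonneg fun j _ => ha j)
    (mul_pos (cfB_succ_pos ha hb i) (cfB_succ_pos ha hb (i + 1))).le

theorem cfGap_antitone (ha : ∀ n, 0 ≤ a (n + 1)) (hb : ∀ n, 0 < b (n + 1)) :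
    Antitone (cfGap a b) := by
  refine antitone_nat_of_succ_le fun i => ?_
  have hB := cfB_succ_pos ha hb
  have hgrowth : a (i + 2) * cfB a b (i + 1) ≤ cfB a b (i + 3) := by
    rw [isWallisSolution_cfB a b (i + 1)]
    exact le_add_of_nonneg_left (mul_pos (hb _) (hB (i + 1))).le
  have hP : 0 ≤ ∏ j ∈ Finset.range (i + 1), a (j + 1) := Finset.prod_nonneg fun j _ => ha j
  rw [cfGap, cfGap, Finset.prod_range_succ,
    div_le_div_iff₀ (mul_pos (hB (i + 1)) (hB (i + 2))) (mul_pos (hB i) (hB (i + 1)))]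
  linarith [mul_le_mul_of_nonneg_left hgrowth (mul_nonneg hP (hB (i + 1)).le)]

theorem one_add_mul_cfB_mul_cfB_le (ha : ∀ n, 0 ≤ a (n + 1)) (hb : ∀ n, 0 < b (n + 1))
    {w : ℝ} {i : ℕ} (h : w ^ 2 * a (i + 3) ≤ 4 * (b (i + 2) * b (i + 3))) :
    (1 + w) * (a (i + 2) * a (i + 3) * (cfB a b (i + 1) * cfB a b (i + 2))) ≤
      cfB a b (i + 3) * cfB a b (i + 4) := by
  have ha₃ : 0 ≤ a (i + 3) := ha (i + 2)
  have hb₂ : 0 < b (i + 2) := hb (i + 1)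
  have hb₃ : 0 < b (i + 3) := hb (i + 2)
  have ht : 0 < cfB a b (i + 2) := cfB_succ_pos ha hb (i + 1)
  have hu : 0 ≤ a (i + 2) * cfB a b (i + 1) := mul_nonneg (ha _) (cfB_succ_pos ha hb i).le
  have hdiscrim : (w * a (i + 3)) ^ 2 ≤ 4 * b (i + 3) * (b (i + 2) * a (i + 3)) := by
    linarith [mul_le_mul_of_nonneg_right h ha₃]
  have hamgm := mul_mul_le_of_sq_le_four_mul hb₃ hdiscrim
    (a (i + 2) * cfB a b (i + 1)) (cfB a b (i + 2))
  rw [isWallisSolution_cfB a b (i + 2), isWallisSolution_cfB a b (i + 1)]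
  set t := cfB a b (i + 2)
  set u := a (i + 2) * cfB a b (i + 1) with hu_def
  have hrest : 0 ≤ b (i + 3) * (b (i + 2) ^ 2 * t ^ 2 + 2 * b (i + 2) * t * u) := by positivity
  calc (1 + w) * (a (i + 2) * a (i + 3) * (cfB a b (i + 1) * t))
      = a (i + 3) * (u * t) + w * a (i + 3) * (u * t) := by rw [hu_def]; ring
    _ ≤ a (i + 3) * (u * t) + (b (i + 3) * u ^ 2 + b (i + 2) * a (i + 3) * t ^ 2)
        + b (i + 3) * (b (i + 2) ^ 2 * t ^ 2 + 2 * b (i + 2) * t * u) := by linarith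
    _ = (b (i + 2) * t + u) * (b (i + 3) * (b (i + 2) * t + u) + a (i + 3) * t) := by ring

theorem one_add_mul_cfGap_add_two_le (ha : ∀ n, 0 ≤ a (n + 1)) (hb : ∀ n, 0 < b (n + 1))
    {w : ℝ} {i : ℕ} (h : w ^ 2 * a (i + 3) ≤ 4 * (b (i + 2) * b (i + 3))) :
    (1 + w) * cfGap a b (i + 2) ≤ cfGap a b i := by
  have hB := cfB_succ_pos ha hb
  have hP : 0 ≤ ∏ j ∈ Finset.range (i + 1), a (j + 1) := Finset.prod_nonneg fun j _ => ha j
  rw [cfGap, cfGap, Finset.prod_range_succ, Finset.prod_range_succ, ← mul_div_assoc,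
    div_le_div_iff₀ (mul_pos (hB (i + 2)) (hB (i + 3))) (mul_pos (hB i) (hB (i + 1)))]
  linarith [mul_le_mul_of_nonneg_left (one_add_mul_cfB_mul_cfB_le ha hb h) hP]

theorem exists_cfConvergesTo_of_not_summable (ha : ∀ n, 0 ≤ a (n + 1)) (hb : ∀ n, 0 < b (n + 1))
    {w : ℕ → ℝ} (hw0 : ∀ n, 0 ≤ w n) (hw : ¬ Summable w)
    (h : ∀ n, w n ^ 2 * a (n + 3) ≤ 4 * (b (n + 2) * b (n + 3))) :
    ∃ v, CFConvergesTo a b v ∧ b 0 ≤ v := by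
  have hanti := cfGap_antitone ha hb
  have hgap : Tendsto (cfGap a b) atTop (nhds 0) :=
    tendsto_zero_of_one_add_mul_le hanti (cfGap_nonneg ha hb) hw0 hw
      fun n => one_add_mul_cfGap_add_two_le ha hb (h n)
  obtain ⟨l, hl⟩ := hanti.tendsto_alternating_series_of_tendsto_zero hgap
  have hl0 : 0 ≤ l := by simpa using hanti.alternating_series_le_tendsto hl 0
  refine ⟨b 0 + l, ⟨(eventually_cfB_pos ha hb).mono fun n hn => hn.ne', ?_⟩,
    le_add_of_nonneg_right hl0⟩
  rw [← tendsto_add_atTop_iff_nat 1]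
  simpa only [cfA_div_cfB_succ ha hb] using hl.const_add (b 0)

end Convergence

section Coefficients

variable {α β y : ℝ}

theorem aSeq_two_mul_add_one (α β : ℝ) (m : ℕ) : aSeq α β (2 * m + 1) =
    (2 * m + 2 - α - β) * (2 * m + 1 + α) * (2 * m + 1 + β) / 4 := by
  have hodd : (2 * m + 1) % 2 ≠ 0 := by lia
  simp only [aSeq, hodd, if_false]
  push_cast
  ring

theorem aSeq_two_mul_add_two (α β : ℝ) (m : ℕ) : aSeq α β (2 * m + 2) =
    (2 * m + α + β) * (2 * m + 1 - α) * (2 * m + 1 - β) / 4 := by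
  have heven : (2 * m + 2) % 2 = 0 := by lia
  simp only [aSeq, heven, if_true]
  push_cast
  ring

theorem bSeq_two_mul_add_one (y : ℝ) (m : ℕ) : bSeq y (2 * m + 1) = 2 * m + 1 := by
  simp [bSeq]

theorem bSeq_two_mul_add_two (y : ℝ) (m : ℕ) : bSeq y (2 * m + 2) = y ^ 2 - 1 := by
  simp [bSeq]

theorem aSeq_succ_nonneg (hα : |α| ≤ 1) (hβ : |β| ≤ 1) (hαβ : 0 ≤ α + β) (n : ℕ) :
    0 ≤ aSeq α β (n + 1) := by
  rw [abs_le] at hα hβ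
  obtain ⟨m, rfl | rfl⟩ := n.even_or_odd'
  all_goals have : (0 : ℝ) ≤ m := m.cast_nonneg
  · rw [aSeq_two_mul_add_one]
    exact div_nonneg (mul_nonneg (mul_nonneg (by linarith) (by linarith)) (by linarith)) (by simp)
  · rw [aSeq_two_mul_add_two]
    exact div_nonneg (mul_nonneg (mul_nonneg (by linarith) (by linarith)) (by linarith)) (by simp)

theorem aSeq_succ_le (hα : |α| ≤ 1) (hβ : |β| ≤ 1) (hαβ : 0 ≤ α + β) (n : ℕ) :
    aSeq α β (n + 1) ≤ (n + 2) ^ 3 / 4 := by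
  rw [abs_le] at hα hβ
  rw [pow_three']
  obtain ⟨m, rfl | rfl⟩ := n.even_or_odd'
  all_goals
    have : (0 : ℝ) ≤ m := m.cast_nonneg
    push_cast
  · rw [aSeq_two_mul_add_one]
    gcongr ?_ * ?_ * ?_ / 4 <;> linarith
  · rw [aSeq_two_mul_add_two]
    gcongr ?_ * ?_ * ?_ / 4 <;> linarith

theorem bSeq_succ_pos (hy : 1 < y) (n : ℕ) : 0 < bSeq y (n + 1) := by
  obtain ⟨m, rfl | rfl⟩ := n.even_or_odd'
  · rw [bSeq_two_mul_add_one]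
    positivity
  · rw [bSeq_two_mul_add_two]
    nlinarith

theorem le_bSeq_mul_bSeq (hy : 1 < y) (n : ℕ) :
    (n + 1) * (y ^ 2 - 1) ≤ bSeq y (n + 1) * bSeq y (n + 2) := by
  have hy2 : 0 < y ^ 2 - 1 := by nlinarith
  obtain ⟨m, rfl | rfl⟩ := n.even_or_odd'
  · rw [bSeq_two_mul_add_one, bSeq_two_mul_add_two]
    push_cast
    rfl
  · rw [bSeq_two_mul_add_two, show 2 * m + 1 + 2 = 2 * (m + 1) + 1 by ring, bSeq_two_mul_add_one]
    push_cast
    linarith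

theorem exists_pos_cfConvergesTo_aSeq_bSeq (hα : |α| ≤ 1) (hβ : |β| ≤ 1) (hαβ : 0 ≤ α + β)
    (hy : 1 < y) : ∃ v, CFConvergesTo (aSeq α β) (bSeq y) v ∧ 0 < v := by
  have hb0 : 0 < bSeq y 0 := by
    simp only [bSeq, if_true]
    nlinarith
  have hw : ¬ Summable fun n : ℕ => (y - 1) / ((n : ℝ) + 4) := by
    simp_rw [div_eq_mul_inv]
    rw [summable_mul_left_iff (sub_pos.2 hy).ne']
    exact_mod_cast mt (summable_nat_add_iff 4).1 Real.not_summable_natCast_inv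
  have hab : ∀ n : ℕ, ((y - 1) / ((n : ℝ) + 4)) ^ 2 * aSeq α β (n + 3) ≤
      4 * (bSeq y (n + 2) * bSeq y (n + 3)) := fun n => by
    have ha := aSeq_succ_le hα hβ hαβ (n + 2)
    have hbb := le_bSeq_mul_bSeq hy (n + 1)
    push_cast at ha hbb
    calc ((y - 1) / ((n : ℝ) + 4)) ^ 2 * aSeq α β (n + 3)
        ≤ ((y - 1) / ((n : ℝ) + 4)) ^ 2 * (((n : ℝ) + 2 + 2) ^ 3 / 4) := by gcongr
      _ = (y - 1) ^ 2 * (n + 4) / 4 := by field_simp; ring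
      _ ≤ 4 * ((n + 1 + 1) * (y ^ 2 - 1)) := by
        nlinarith [mul_nonneg n.cast_nonneg (sub_pos.2 hy).le]
      _ ≤ 4 * (bSeq y (n + 2) * bSeq y (n + 3)) := by gcongr
  obtain ⟨v, hv, hbv⟩ := exists_cfConvergesTo_of_not_summable (aSeq_succ_nonneg hα hβ hαβ)
    (bSeq_succ_pos hy) (fun n => div_nonneg (sub_pos.2 hy).le (by positivity)) hw hab
  exact ⟨v, hv, hb0.trans_le hbv⟩

end Coefficients

section BauerMuir

variable {α β x : ℝ}

/-- The numerator of `F(x) / F(x + 2)`: the factor by which the Bauer–Muir transformation from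
`x` to `x + 2` rescales the canonical numerators. -/
def shiftNum (α β x : ℝ) : ℝ := (x + α) * (x + 1 - α - β) * (x + β)

/-- The denominator of `F(x) / F(x + 2)`: the factor by which the Bauer–Muir transformation from
`x` to `x + 2` rescales the canonical denominators. -/
def shiftDen (α β x : ℝ) : ℝ := (x + 2 - α) * (x + 1 + α + β) * (x + 2 - β)

theorem shiftNum_pos (hα : |α| ≤ 1) (hβ : |β| ≤ 1) (hx : 1 < x) : 0 < shiftNum α β x := by
  rw [abs_le] at hα hβ
  exact mul_pos (mul_pos (by linarith) (by linarith)) (by linarith)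

-- The coefficients are the solution polynomial in `m` of the recurrence they must satisfy for the
-- transformed sequence to solve the Wallis recurrence at `x + 2`.
theorem IsWallisSolution.bauerMuir {κ : ℝ} {U V : ℕ → ℝ}
    (hU : IsWallisSolution (aSeq α β) (bSeq x) U)
    (hV : IsWallisSolution (aSeq α β) (bSeq (x + 2)) V)
    (h₀ : κ * V 0 = shiftNum α β x * U 0)
    (h₁ : κ * V 1 = shiftDen α β x * U 1 + 4 * (x + 1) ^ 2 * aSeq α β 1 * U 0) (m : ℕ) :
    κ * V (2 * m) = (4 * (x + 1) * m * (2 * m + 1 - x) + shiftNum α β x) * U (2 * m)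
        + 8 * m * U (2 * m + 1) ∧
      κ * V (2 * m + 1) = (4 * (x + 1) * m * (2 * m + 3 + x) + shiftDen α β x) * U (2 * m + 1)
        + 4 * (x + 1) ^ 2 * aSeq α β (2 * m + 1) * U (2 * m) := by
  induction m with
  | zero => simpa using ⟨h₀, h₁⟩
  | succ m ih =>
    obtain ⟨ih_even, ih_odd⟩ := ih
    have hU₂ := hU (2 * m)
    have hU₃ := hU (2 * m + 1)
    have hV₂ : κ * V (2 * m + 2) = bSeq (x + 2) (2 * m + 1) * (κ * V (2 * m + 1))
        + aSeq α β (2 * m + 1) * (κ * V (2 * m)) := by rw [hV (2 * m)]; ring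
    have hV₃ : κ * V (2 * m + 3) = bSeq (x + 2) (2 * m + 2) * (κ * V (2 * m + 2))
        + aSeq α β (2 * m + 2) * (κ * V (2 * m + 1)) := by rw [hV (2 * m + 1)]; ring
    rw [show 2 * (m + 1) + 1 = 2 * m + 3 by ring, show 2 * (m + 1) = 2 * m + 2 by ring, hV₃, hV₂,
      ih_odd, ih_even, hU₃, hU₂, show 2 * m + 3 = 2 * (m + 1) + 1 by ring]
    simp only [aSeq_two_mul_add_one, aSeq_two_mul_add_two, bSeq_two_mul_add_one,
      bSeq_two_mul_add_two, shiftNum, shiftDen]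
    push_cast
    constructor <;> ring

theorem shiftNum_mul_cfA (α β x : ℝ) (m : ℕ) :
    shiftNum α β x * cfA (aSeq α β) (bSeq (x + 2)) (2 * m) =
      (4 * (x + 1) * m * (2 * m + 1 - x) + shiftNum α β x) * cfA (aSeq α β) (bSeq x) (2 * m)
        + 8 * m * cfA (aSeq α β) (bSeq x) (2 * m + 1) := by
  refine ((isWallisSolution_cfA _ _).bauerMuir (isWallisSolution_cfA _ _) rfl ?_ m).1
  simp only [cfA, bSeq, if_true, shiftNum, shiftDen, aSeq_two_mul_add_one α β 0]
  push_cast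
  ring

theorem shiftDen_mul_cfB (α β x : ℝ) (m : ℕ) :
    shiftDen α β x * cfB (aSeq α β) (bSeq (x + 2)) (2 * m) =
      (4 * (x + 1) * m * (2 * m + 1 - x) + shiftNum α β x) * cfB (aSeq α β) (bSeq x) (2 * m)
        + 8 * m * cfB (aSeq α β) (bSeq x) (2 * m + 1) :=
  ((isWallisSolution_cfB _ _).bauerMuir (isWallisSolution_cfB _ _) (by simp [cfB])
    (by simp [cfB]) m).1

theorem eventually_bauerMuir_weight_nonneg (hα : |α| ≤ 1) (hβ : |β| ≤ 1) (hx : 1 < x) :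
    ∀ᶠ m : ℕ in atTop, 0 ≤ 4 * (x + 1) * m * (2 * m + 1 - x) + shiftNum α β x := by
  filter_upwards [tendsto_natCast_atTop_atTop.eventually_ge_atTop x] with m hm
  have hm' : 0 ≤ 2 * (m : ℝ) + 1 - x := by linarith
  have hnum := shiftNum_pos hα hβ hx
  positivity

theorem CFConvergesTo.eq_shiftNum_div_shiftDen_mul (hα : |α| ≤ 1) (hβ : |β| ≤ 1) (hαβ : 0 ≤ α + β)
    (hx : 1 < x) {F₁ F₂ : ℝ} (hF₁ : CFConvergesTo (aSeq α β) (bSeq x) F₁)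
    (hF₂ : CFConvergesTo (aSeq α β) (bSeq (x + 2)) F₂) :
    F₁ = shiftNum α β x / shiftDen α β x * F₂ := by
  have heven : Tendsto (fun m : ℕ => 2 * m) atTop atTop := tendsto_id.const_mul_atTop' two_pos
  have hodd : Tendsto (fun m : ℕ => 2 * m + 1) atTop atTop :=
    (tendsto_add_atTop_nat 1).comp heven
  have hB : ∀ᶠ n in atTop, 0 < cfB (aSeq α β) (bSeq x) n :=
    eventually_cfB_pos (aSeq_succ_nonneg hα hβ hαβ) (bSeq_succ_pos hx)
  have hweight : ∀ᶠ m : ℕ in atTop, (0 : ℝ) < 8 * m := by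
    filter_upwards [eventually_gt_atTop 0] with m hm
    positivity
  have hmediant := tendsto_weighted_mediant (hF₁.2.comp heven) (hF₁.2.comp hodd)
    (heven.eventually hB) (hodd.eventually hB)
    (eventually_bauerMuir_weight_nonneg hα hβ hx) hweight
  refine tendsto_nhds_unique hmediant (((hF₂.2.comp heven).const_mul _).congr fun m => ?_)
  rw [← shiftNum_mul_cfA, ← shiftDen_mul_cfB, Function.comp_apply, mul_div_mul_comm]

end BauerMuir

theorem stmt15_general (α β : ℝ) (hα : |α| ≤ 1) (hβ : |β| ≤ 1) (hαβ : 0 ≤ α + β)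
    (x : ℝ) (hx : 1 < x) :
    ∃ F1 F2 : ℝ, CFConvergesTo (aSeq α β) (bSeq x) F1 ∧ 0 < F1 ∧
      CFConvergesTo (aSeq α β) (bSeq (x + 2)) F2 ∧ 0 < F2 ∧
      F1 / F2 = (x + α) * (x + 1 - α - β) * (x + β) /
        ((x + 2 - α) * (x + 1 + α + β) * (x + 2 - β)) := by
  obtain ⟨F₁, hF₁, hF₁_pos⟩ := exists_pos_cfConvergesTo_aSeq_bSeq hα hβ hαβ hx
  obtain ⟨F₂, hF₂, hF₂_pos⟩ :=
    exists_pos_cfConvergesTo_aSeq_bSeq (y := x + 2) hα hβ hαβ (by linarith)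
  refine ⟨F₁, F₂, hF₁, hF₁_pos, hF₂, hF₂_pos, ?_⟩
  rw [div_eq_iff hF₂_pos.ne']
  exact hF₁.eq_shiftNum_div_shiftDen_mul hα hβ hαβ hx hF₂

theorem stmt15 (α β : ℝ) (hα0 : 0 < α) (hα1 : α < 1) (hβ0 : 0 < β) (hβ1 : β < 1)
    (x : ℝ) (hx : 2 < x) :
    ∃ F1 F2 : ℝ, CFConvergesTo (aSeq α β) (bSeq x) F1 ∧ 0 < F1 ∧
      CFConvergesTo (aSeq α β) (bSeq (x + 2)) F2 ∧ 0 < F2 ∧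
      F1 / F2 = (x + α) * (x + 1 - α - β) * (x + β) /
        ((x + 2 - α) * (x + 1 + α + β) * (x + 2 - β)) := by
  exact stmt15_general α β (abs_le.2 ⟨by linarith, hα1.le⟩) (abs_le.2 ⟨by linarith, hβ1.le⟩)
    (by linarith) x (by linarith)
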